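/- If l is a prime with l ≡ 13, 17, 19, or 23 (mod 24), then b_4(3l(ln+j) + (9l^2-1)/8) ≡ 0 (mod 3) for every nonnegative integer n and every j with 1 ≤ j ≤ l-1. -/

import Mathlib

/-- `bReg k n` is the number of `k`-regular partitions of `n`,
i.e. partitions of `n` in which no part is divisible by `k`. -/
noncomputable def bReg (k n : ℕ) : ℕ :=
  (Finset.univ.filter fun p : n.Partition => ∀ i ∈ p.parts, ¬ k ∣ i).card

namespace B4

open PowerSeries

/-- The parity sign with values in `ZMod 3`. -/
def sg (n : ℤ) : ZMod 3 := if n % 2 = 0 then 1 else -1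

lemma sg_congr {a b : ℤ} (h : a % 2 = b % 2) : sg a = sg b := by
  unfold sg; rw [h]

lemma sg_flip {a b : ℤ} (h : a % 2 ≠ b % 2) : sg a = - sg b := by
  unfold sg
  rcases Int.emod_two_eq_zero_or_one a with ha | ha <;>
  rcases Int.emod_two_eq_zero_or_one b with hb | hb <;> simp_all

lemma sg_mul (a b : ℤ) : sg a * sg b = sg (a + b) := by
  unfold sg
  rcases Int.emod_two_eq_zero_or_one a with ha | ha <;>
  rcases Int.emod_two_eq_zero_or_one b with hb | hb <;>
  simp [ha, hb, Int.add_emod]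

/-- Weighted number of indices with a given exponent. -/
noncomputable def cf {ι : Type} (e : ι → ℕ) (s : ι → ZMod 3) (n : ℕ) : ZMod 3 :=
  ∑ᶠ i, if e i = n then s i else 0

/-- The generating series `∑ s i X ^ (e i)`. -/
noncomputable def PS {ι : Type} (e : ι → ℕ) (s : ι → ZMod 3) : PowerSeries (ZMod 3) :=
  PowerSeries.mk (cf e s)

/-- Finite fibres. -/
def FF {ι : Type} (e : ι → ℕ) : Prop := ∀ n, {i | e i = n}.Finite

lemma FF.le {ι : Type} {e : ι → ℕ} (h : FF e) (n : ℕ) : {i | e i ≤ n}.Finite := by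
  have : {i | e i ≤ n} = ⋃ k ∈ Finset.range (n + 1), {i | e i = k} := by
    ext i; simp
  rw [this]
  exact Set.Finite.biUnion (Finset.finite_toSet _) (fun k _ => h k)

lemma FF.supp {ι : Type} {e : ι → ℕ} (h : FF e) (s : ι → ZMod 3) (n : ℕ) :
    (Function.support (fun i => if e i = n then s i else 0)).Finite := by
  refine (h n).subset fun i hi => ?_
  by_contra hc
  exact hi (if_neg hc)

lemma FF.prod {ι κ : Type} {e : ι → ℕ} {e' : κ → ℕ} (h : FF e) (h' : FF e') :
    FF (fun p : ι × κ => e p.1 + e' p.2) := by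
  intro n
  refine ((h.le n).prod (h'.le n)).subset ?_
  rintro ⟨i, j⟩ hij
  simp only [Set.mem_ofPred_eq, Set.mem_prod] at hij ⊢
  omega

lemma FF.inj {ι κ : Type} {e : ι → ℕ} (h : FF e) {g : κ → ι} (hg : Function.Injective g) :
    FF (fun k => e (g k)) := by
  intro n
  exact (h n).preimage hg.injOn

lemma FF.smul {ι : Type} {e : ι → ℕ} (h : FF e) {k : ℕ} (hk : 0 < k) :
    FF (fun i => k * e i) := by
  intro n
  refine (h.le n).subset fun i hi => ?_
  simp only [Set.mem_ofPred_eq] at hi ⊢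
  nlinarith

lemma PS_mul {ι κ : Type} {e : ι → ℕ} {e' : κ → ℕ} (h : FF e) (h' : FF e')
    (s : ι → ZMod 3) (s' : κ → ZMod 3) :
    PS e s * PS e' s' = PS (fun p : ι × κ => e p.1 + e' p.2) (fun p => s p.1 * s' p.2) := by
  classical
  ext n
  rw [coeff_mul]
  simp only [PS, coeff_mk]
  have h1 : ∀ a ≤ n, cf e s a = ∑ i ∈ (h.le n).toFinset, if e i = a then s i else 0 := by
    intro a ha
    refine finsum_eq_sum_of_support_subset _ fun i hi => ?_
    have : e i = a := by
      by_contra hc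
      exact hi (if_neg hc)
    simp; omega
  have h2 : ∀ a ≤ n, cf e' s' a = ∑ i ∈ (h'.le n).toFinset, if e' i = a then s' i else 0 := by
    intro a ha
    refine finsum_eq_sum_of_support_subset _ fun i hi => ?_
    have : e' i = a := by
      by_contra hc
      exact hi (if_neg hc)
    simp; omega
  have h3 : cf (fun p : ι × κ => e p.1 + e' p.2) (fun p => s p.1 * s' p.2) n =
      ∑ p ∈ (h.le n).toFinset ×ˢ (h'.le n).toFinset,
        if e p.1 + e' p.2 = n then s p.1 * s' p.2 else 0 := by
    refine finsum_eq_sum_of_support_subset _ fun i hi => ?_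
    have : e i.1 + e' i.2 = n := by
      by_contra hc
      exact hi (if_neg hc)
    simp; omega
  rw [h3, Finset.sum_product]
  calc _ = ∑ p ∈ Finset.HasAntidiagonal.antidiagonal n, ∑ i ∈ (h.le n).toFinset, ∑ j ∈ (h'.le n).toFinset,
        (if e i = p.1 then s i else 0) * (if e' j = p.2 then s' j else 0) := by
        refine Finset.sum_congr rfl fun p hp => ?_
        have := Finset.HasAntidiagonal.mem_antidiagonal.1 hp
        rw [h1 _ (by omega), h2 _ (by omega), Finset.sum_mul_sum]
    _ = _ := by
        rw [Finset.sum_comm]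
        refine Finset.sum_congr rfl fun i _ => ?_
        rw [Finset.sum_comm]
        refine Finset.sum_congr rfl fun j _ => ?_
        simp only [ite_mul, mul_ite, zero_mul, mul_zero, ← ite_and]
        by_cases hh : e i + e' j = n
        · rw [if_pos hh, Finset.sum_eq_single (e i, e' j)]
          · simp
          · rintro ⟨a, b⟩ _ hab
            refine if_neg fun hc => hab ?_
            simp [hc.1, hc.2]
          · intro hc
            exact absurd (Finset.HasAntidiagonal.mem_antidiagonal.2 hh) hc
        · rw [if_neg hh]
          refine Finset.sum_eq_zero fun p hp => if_neg fun hc => hh ?_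
          have := Finset.HasAntidiagonal.mem_antidiagonal.1 hp
          omega

lemma finsum_decomp {ι κ κ' : Type} (f : ι → ZMod 3) (hf : (Function.support f).Finite)
    {g : κ → ι} {g' : κ' → ι} (hg : Function.Injective g) (hg' : Function.Injective g')
    (hd : ∀ x y, g x ≠ g' y) (hc : ∀ i, (∃ x, g x = i) ∨ ∃ y, g' y = i) :
    ∑ᶠ i, f i = ∑ᶠ x, f (g x) + ∑ᶠ y, f (g' y) := by
  rw [← finsum_mem_range hg, ← finsum_mem_range hg', ← finsum_mem_union', ← finsum_mem_univ]
  · congr 1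
    ext i
    have : i ∈ Set.range g ∪ Set.range g' := hc i
    simp [this]
  · rw [Set.disjoint_left]
    rintro _ ⟨x, rfl⟩ ⟨y, hy⟩
    exact hd x y hy.symm
  · exact hf.inter_of_right _
  · exact hf.inter_of_right _

lemma cf_decomp {ι κ κ' : Type} {e : ι → ℕ} (he : FF e) (s : ι → ZMod 3) (n : ℕ)
    (g : κ → ι) (g' : κ' → ι) (hg : Function.Injective g) (hg' : Function.Injective g')
    (hd : ∀ x y, g x ≠ g' y) (hc : ∀ i, (∃ x, g x = i) ∨ ∃ y, g' y = i) :
    cf e s n = cf (fun x => e (g x)) (fun x => s (g x)) n +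
      cf (fun x => e (g' x)) (fun x => s (g' x)) n :=
  finsum_decomp _ (he.supp s n) hg hg' hd hc

lemma cf_congr {ι : Type} {e e' : ι → ℕ} {s s' : ι → ZMod 3} (h : ∀ i, e i = e' i)
    (h' : ∀ i, s i = s' i) (n : ℕ) : cf e s n = cf e' s' n := by
  rw [funext h, funext h']

/-- A sign reversing, exponent preserving involution kills the sum. -/
lemma cf_cancel {ι : Type} {e : ι → ℕ} {s : ι → ZMod 3} (g : ι → ι) (hg : ∀ i, g (g i) = i)
    (he : ∀ i, e (g i) = e i) (hs : ∀ i, s (g i) = - s i) (n : ℕ) : cf e s n = 0 := by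
  have h1 : cf e s n = - cf e s n := by
    unfold cf
    rw [← finsum_neg_distrib]
    refine finsum_eq_of_bijective g (Function.Involutive.bijective hg) fun i => ?_
    rw [he, hs]
    split_ifs <;> simp
  revert h1
  generalize cf e s n = c
  revert c
  decide

/-- Triangular numbers. -/
def tri (b : ℤ) : ℕ := (b * (b + 1) / 2).toNat

lemma tri_spec (b : ℤ) : 2 * (tri b : ℤ) = b * (b + 1) := by
  have h0 : 0 ≤ b * (b + 1) := by
    rcases le_or_gt 0 b with h | h
    · positivity
    · nlinarith
  have h1 : b * (b + 1) % 2 = 0 := Int.even_iff.1 (Int.even_mul_succ_self b)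
  unfold tri
  rw [Int.toNat_of_nonneg (by omega)]
  omega

/-- Squares. -/
def sq (b : ℤ) : ℕ := b.natAbs ^ 2

lemma sq_spec (b : ℤ) : (sq b : ℤ) = b ^ 2 := by
  simp [sq]

lemma FF_tri : FF tri := by
  intro n
  refine (Set.finite_Icc (-(n : ℤ) - 1) n).subset fun b hb => ?_
  have h := tri_spec b
  simp only [Set.mem_ofPred_eq] at hb
  rw [hb] at h
  simp only [Set.mem_Icc]
  constructor
  · by_contra hc; push Not at hc; nlinarith
  · by_contra hc; push Not at hc; nlinarith

lemma FF_sq : FF sq := by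
  intro n
  refine (Set.finite_Icc (-(n : ℤ)) n).subset fun b hb => ?_
  have h := sq_spec b
  simp only [Set.mem_ofPred_eq] at hb
  rw [hb] at h
  simp only [Set.mem_Icc]
  constructor
  · by_contra hc; push Not at hc; nlinarith
  · by_contra hc; push Not at hc; nlinarith

lemma pent_spec (k : ℤ) : 2 * (pentagonal k : ℤ) = k * (3 * k - 1) := by
  exact two_mul_natCast_pentagonal k

lemma FF_pent : FF pentagonal := by
  intro n
  refine Set.Subsingleton.finite fun a ha b hb => ?_
  exact pentagonal_injective (ha.trans hb.symm)

end B4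

namespace B4

open PowerSeries

/-- `φ(-q^k)` -/
noncomputable def phm (k : ℕ) : PowerSeries (ZMod 3) := PS (fun x : ℤ => k * sq x) (fun x => sg x)
/-- `φ(q)` -/
noncomputable def php : PowerSeries (ZMod 3) := PS (fun x : ℤ => 1 * sq x) (fun _ => 1)
/-- `2ψ(q^k)` -/
noncomputable def psp (k : ℕ) : PowerSeries (ZMod 3) := PS (fun x : ℤ => k * tri x) (fun _ => 1)
/-- `2ψ(-q^k)` with sign of the triangular number -/
noncomputable def psm (k : ℕ) : PowerSeries (ZMod 3) :=
  PS (fun x : ℤ => k * tri x) (fun x => sg (tri x))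
/-- `f_k` as a pentagonal series -/
noncomputable def pen (k : ℕ) : PowerSeries (ZMod 3) :=
  PS (fun x : ℤ => k * pentagonal x) (fun x => sg x)

lemma FFt {k : ℕ} (hk : 0 < k) : FF (fun x : ℤ => k * tri x) := FF_tri.smul hk
lemma FFs {k : ℕ} (hk : 0 < k) : FF (fun x : ℤ => k * sq x) := FF_sq.smul hk
lemma FFp {k : ℕ} (hk : 0 < k) : FF (fun x : ℤ => k * pentagonal x) := FF_pent.smul hk

/-- `φ(q) φ(-q) = φ(-q²)²` -/
lemma L1 : php * phm 1 = phm 2 ^ 2 := by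
  rw [pow_two]
  unfold php phm
  rw [PS_mul (FFs one_pos) (FFs one_pos), PS_mul (FFs two_pos) (FFs two_pos)]
  ext n
  simp only [PS, coeff_mk]
  rw [cf_decomp ((FFs one_pos).prod (FFs one_pos)) _ n
    (fun p : ℤ × ℤ => (p.1 + p.2, p.1 - p.2)) (fun p : ℤ × ℤ => (p.1 + p.2 + 1, p.1 - p.2))]
  · refine (congrArg₂ (· + ·) ?_ (cf_cancel (fun p : ℤ × ℤ => (p.1, -1 - p.2)) ?_ ?_ ?_ n)).trans
      (add_zero _)
    · apply cf_congr
      · rintro ⟨a, b⟩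
        zify
        simp only [sq_spec]
        ring
      · rintro ⟨a, b⟩
        rw [sg_mul, one_mul]
        apply sg_congr
        dsimp only
        omega
    · rintro ⟨a, b⟩
      ext <;> simp
    · rintro ⟨a, b⟩
      zify
      simp only [sq_spec]
      ring
    · rintro ⟨a, b⟩
      simp only [one_mul]
      apply sg_flip
      omega
  · rintro ⟨a, b⟩ ⟨c, d⟩ h
    simp only [Prod.mk.injEq] at h ⊢
    omega
  · rintro ⟨a, b⟩ ⟨c, d⟩ h
    simp only [Prod.mk.injEq] at h ⊢
    omega
  · rintro ⟨a, b⟩ ⟨c, d⟩ h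
    simp only [Prod.mk.injEq] at h
    omega
  · rintro ⟨a, b⟩
    simp only [Prod.mk.injEq, Prod.exists]
    rcases Int.emod_two_eq_zero_or_one (a + b) with h | h
    · left
      exact ⟨(a + b) / 2, (a - b) / 2, by omega, by omega⟩
    · right
      exact ⟨(a + b - 1) / 2, (a - b - 1) / 2, by omega, by omega⟩

lemma L23core (χ : ℕ → ZMod 3) (n : ℕ) :
    cf (fun p : ℤ × ℤ => 1 * tri p.1 + 1 * tri p.2) (fun p => χ (1 * tri p.1 + 1 * tri p.2)) n =
    2 * cf (fun p : ℤ × ℤ => 1 * sq p.1 + 2 * tri p.2) (fun p => χ (1 * sq p.1 + 2 * tri p.2)) n := by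
  rw [cf_decomp ((FFt one_pos).prod (FFt one_pos)) _ n
    (fun p : ℤ × ℤ => (p.2 + p.1, p.2 - p.1)) (fun p : ℤ × ℤ => (p.2 + p.1, -1 - p.2 + p.1)), two_mul]
  · have h1 : ∀ p : ℤ × ℤ, 1 * tri (p.2 + p.1) + 1 * tri (p.2 - p.1) = 1 * sq p.1 + 2 * tri p.2 := by
      rintro ⟨a, b⟩
      have h1 := tri_spec (b + a)
      have h2 := tri_spec (b - a)
      have h3 := tri_spec b
      have h4 := sq_spec a
      zify
      linarith
    have h2 : ∀ p : ℤ × ℤ, 1 * tri (p.2 + p.1) + 1 * tri (-1 - p.2 + p.1) =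
        1 * sq p.1 + 2 * tri p.2 := by
      rintro ⟨a, b⟩
      have h1 := tri_spec (b + a)
      have h2 := tri_spec (-1 - b + a)
      have h3 := tri_spec b
      have h4 := sq_spec a
      zify
      linarith
    congr 1
    · exact cf_congr h1 (fun p => by dsimp only; rw [h1]) n
    · exact cf_congr h2 (fun p => by dsimp only; rw [h2]) n
  · rintro ⟨a, b⟩ ⟨c, d⟩ h
    simp only [Prod.mk.injEq] at h ⊢
    omega
  · rintro ⟨a, b⟩ ⟨c, d⟩ h
    simp only [Prod.mk.injEq] at h ⊢
    omega
  · rintro ⟨a, b⟩ ⟨c, d⟩ h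
    simp only [Prod.mk.injEq] at h
    omega
  · rintro ⟨a, b⟩
    simp only [Prod.mk.injEq, Prod.exists]
    rcases Int.emod_two_eq_zero_or_one (a + b) with h | h
    · left
      exact ⟨(a - b) / 2, (a + b) / 2, by omega, by omega⟩
    · right
      exact ⟨(a + b + 1) / 2, (a - b - 1) / 2, by omega, by omega⟩

lemma coeff_two_mul (f : PowerSeries (ZMod 3)) (n : ℕ) : coeff n (2 * f) = 2 * coeff n f := by
  rw [two_mul, two_mul, map_add]

/-- `φ(-q) ψ(q²) = ψ(-q)²` -/
lemma L2 : 2 * (phm 1 * psp 2) = psm 1 ^ 2 := by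
  rw [pow_two]
  unfold phm psp psm
  rw [PS_mul (FFs one_pos) (FFt two_pos), PS_mul (FFt one_pos) (FFt one_pos)]
  ext n
  rw [coeff_two_mul]
  simp only [PS, coeff_mk]
  have := L23core (fun m => sg m) n
  refine Eq.trans (Eq.trans ?_ this.symm) ?_
  · congr 1
    apply cf_congr (fun _ => rfl)
    rintro ⟨a, b⟩
    rw [mul_one]
    apply sg_congr
    push_cast
    rw [sq_spec]
    rcases Int.emod_two_eq_zero_or_one a with h | h <;> simp [pow_two, Int.add_emod, Int.mul_emod, h]
  · apply cf_congr (fun _ => rfl)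
    rintro ⟨a, b⟩
    rw [sg_mul]
    simp

/-- `φ(q) ψ(q²) = ψ(q)²` -/
lemma L3 : 2 * (php * psp 2) = psp 1 ^ 2 := by
  rw [pow_two]
  unfold php psp
  rw [PS_mul (FFs one_pos) (FFt two_pos), PS_mul (FFt one_pos) (FFt one_pos)]
  ext n
  rw [coeff_two_mul]
  simp only [PS, coeff_mk]
  have := L23core (fun m => 1) n
  refine Eq.trans (Eq.trans ?_ this.symm) ?_
  · congr 1
  · exact cf_congr (fun _ => rfl) (by simp) n

/-- `f₁ ψ(q) = f₄ φ(-q²)` -/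
lemma L4 : pen 1 * psp 1 = 2 * (pen 4 * phm 2) := by
  unfold pen phm psp
  rw [PS_mul (FFp one_pos) (FFt one_pos), PS_mul (FFp four_pos) (FFs two_pos)]
  ext n
  rw [coeff_two_mul]
  simp only [PS, coeff_mk]
  have i1 : Function.Injective (fun p : ℤ × ℤ => (p.1, 2 * p.2 + 1 + p.1)) := by
    rintro ⟨a, b⟩ ⟨c, d⟩ h
    simp only [Prod.mk.injEq] at h ⊢
    omega
  have key : cf (fun p : ℤ × ℤ => 1 * pentagonal p.1 + 1 * tri (2 * p.2 + 1 + p.1))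
      (fun p => sg p.1 * 1) n =
      cf (fun p : ℤ × ℤ => 4 * pentagonal p.1 + 2 * sq p.2) (fun p => sg p.1 * sg p.2) n := by
    rw [cf_decomp (((FFp one_pos).prod (FFt one_pos)).inj i1) _ n
      (fun p : ℤ × ℤ => (p.1 - p.2, p.2 + p.1 - 1)) (fun p : ℤ × ℤ => (p.1, -p.1 + 2 * p.2))]
    · refine (congrArg₂ (· + ·) ?_ (cf_cancel (fun p : ℤ × ℤ => (1 - p.1 + 2 * p.2, p.2))
        ?_ ?_ ?_ n)).trans (add_zero _)
      · apply cf_congr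
        · rintro ⟨a, b⟩
          dsimp only
          have h1 := pent_spec (a - b)
          have h2 := tri_spec (2 * (b + a - 1) + 1 + (a - b))
          have h3 := pent_spec a
          have h4 := sq_spec b
          zify
          linarith
        · rintro ⟨a, b⟩
          dsimp only
          rw [sg_mul, mul_one]
          apply sg_congr
          omega
      · rintro ⟨a, b⟩
        ext <;> dsimp only <;> ring
      · rintro ⟨a, b⟩
        dsimp only
        have h1 := pent_spec (1 - a + 2 * b)
        have h2 := tri_spec (2 * (-(1 - a + 2 * b) + 2 * b) + 1 + (1 - a + 2 * b))
        have h3 := pent_spec a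
        have h4 := tri_spec (2 * (- a + 2 * b) + 1 + a)
        zify
        linarith
      · rintro ⟨a, b⟩
        dsimp only
        simp only [mul_one]
        apply sg_flip
        omega
    · rintro ⟨a, b⟩ ⟨c, d⟩ h
      simp only [Prod.mk.injEq] at h ⊢
      omega
    · rintro ⟨a, b⟩ ⟨c, d⟩ h
      simp only [Prod.mk.injEq] at h ⊢
      omega
    · rintro ⟨a, b⟩ ⟨c, d⟩ h
      simp only [Prod.mk.injEq] at h
      omega
    · rintro ⟨a, b⟩
      simp only [Prod.mk.injEq, Prod.exists]
      rcases Int.emod_two_eq_zero_or_one (a + b) with h | h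
      · right
        exact ⟨a, (a + b) / 2, by omega, by omega⟩
      · left
        exact ⟨(a + b + 1) / 2, (b - a + 1) / 2, by omega, by omega⟩
  rw [cf_decomp ((FFp one_pos).prod (FFt one_pos)) _ n
    (fun p : ℤ × ℤ => (p.1, 2 * p.2 + 1 + p.1)) (fun p : ℤ × ℤ => (p.1, -2 - 2 * p.2 - p.1)) i1,
    ← key, two_mul]
  · congr 1
    apply cf_congr
    · rintro ⟨a, b⟩
      dsimp only
      have h1 := tri_spec (-2 - 2 * b - a)
      have h2 := tri_spec (2 * b + 1 + a)
      zify
      linarith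
    · rintro ⟨a, b⟩
      rfl
  · rintro ⟨a, b⟩ ⟨c, d⟩ h
    simp only [Prod.mk.injEq] at h ⊢
    omega
  · rintro ⟨a, b⟩ ⟨c, d⟩ h
    simp only [Prod.mk.injEq] at h
    omega
  · rintro ⟨a, b⟩
    simp only [Prod.mk.injEq, Prod.exists]
    rcases Int.emod_two_eq_zero_or_one (a + b) with h | h
    · right
      exact ⟨a, (-2 - a - b) / 2, by omega, by omega⟩
    · left
      exact ⟨a, (b - a - 1) / 2, by omega, by omega⟩

end B4

namespace B4

open PowerSeries

/-- The operator extracting the coefficients at `3m+1`. -/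
noncomputable def U (f : PowerSeries (ZMod 3)) : PowerSeries (ZMod 3) :=
  PowerSeries.mk fun m => coeff (3 * m + 1) f

lemma tri_zmod (b x y m : ℤ) (t : ℤ) (ht : 2 * t = b * (b + 1))
    (h : t + 2 * x ^ 2 + 2 * y ^ 2 = 3 * m + 1) :
    (b % 3 = 1 ∧ x % 3 = 0 ∧ y % 3 = 0) ∨ (b % 3 ≠ 1 ∧ x % 3 ≠ 0 ∧ y % 3 ≠ 0) := by
  have h1 : (b * (b + 1) + 4 * (x * x) + 4 * (y * y)) % 3 = 2 := by
    have : b * (b + 1) + 4 * (x * x) + 4 * (y * y) = 3 * (2 * m) + 2 := by linarith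
    omega
  have hb : b % 3 = 0 ∨ b % 3 = 1 ∨ b % 3 = 2 := by omega
  have hx : x % 3 = 0 ∨ x % 3 = 1 ∨ x % 3 = 2 := by omega
  have hy : y % 3 = 0 ∨ y % 3 = 1 ∨ y % 3 = 2 := by omega
  rcases hb with hb | hb | hb <;> rcases hx with hx | hx | hx <;> rcases hy with hy | hy | hy <;>
    simp [Int.add_emod, Int.mul_emod, hb, hx, hy] at h1 ⊢

lemma L5core1 (f : (ℤ × ℤ) × ℤ → ZMod 3) (hf : (Function.support f).Finite)
    (h1 : ∀ b x y, f ((b, -x), y) = f ((b, x), y)) (h2 : ∀ b x y, f ((b, x), -y) = f ((b, x), y))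
    (h3 : ∀ b x y, f ((b, x), y) ≠ 0 →
      (b % 3 = 1 ∧ x % 3 = 0 ∧ y % 3 = 0) ∨ (b % 3 ≠ 1 ∧ x % 3 ≠ 0 ∧ y % 3 ≠ 0)) :
    ∑ᶠ p, f p = ∑ᶠ p : ℤ × ℤ × ℤ,
      f ((p.2.1 + 2 * p.2.2 - 2 - 3 * p.1, p.2.2 + 2 * p.2.1), p.2.2 - p.2.1) := by
  classical
  let g : (ℤ × ℤ) × ℤ → ZMod 3 := fun p =>
    if (2 * p.1.1 + 1 - p.1.2) % 3 = 0 ∧ (p.1.2 - p.2) % 3 = 0 then f p else 0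
  have hg : (Function.support g).Finite := by
    refine hf.subset fun p hp hc => hp ?_
    simp only [g]
    split_ifs <;> simp [hc]
  have hT : ∑ᶠ p, g p = ∑ᶠ p : ℤ × ℤ × ℤ,
      f ((p.2.1 + 2 * p.2.2 - 2 - 3 * p.1, p.2.2 + 2 * p.2.1), p.2.2 - p.2.1) := by
    have inj : Function.Injective (fun p : ℤ × ℤ × ℤ =>
        (((p.2.1 + 2 * p.2.2 - 2 - 3 * p.1, p.2.2 + 2 * p.2.1), p.2.2 - p.2.1) : (ℤ × ℤ) × ℤ)) := by
      rintro ⟨a, b, c⟩ ⟨a', b', c'⟩ h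
      simp only [Prod.mk.injEq] at h ⊢
      omega
    rw [← finsum_mem_univ, ← finsum_mem_range inj, finsum_mem_univ, finsum_mem_def]
    refine finsum_congr ?_
    rintro ⟨⟨b, x⟩, y⟩
    simp only [g, Set.indicator]
    congr 1
    simp only [Set.mem_range, Prod.mk.injEq, Prod.exists, eq_iff_iff]
    constructor
    · rintro ⟨ha, hb⟩
      exact ⟨((x - y) / 3 + 2 * (y + (x - y) / 3) - 2 - b) / 3, (x - y) / 3, y + (x - y) / 3,
        by omega⟩
    · rintro ⟨r, t, w, h⟩
      omega
  have e1 : Function.Involutive (fun p : (ℤ × ℤ) × ℤ => ((p.1.1, -p.1.2), p.2)) := by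
    rintro ⟨⟨b, x⟩, y⟩; simp
  have e2 : Function.Involutive (fun p : (ℤ × ℤ) × ℤ => ((p.1.1, p.1.2), -p.2)) := by
    rintro ⟨⟨b, x⟩, y⟩; simp
  have e3 : Function.Involutive (fun p : (ℤ × ℤ) × ℤ => ((p.1.1, -p.1.2), -p.2)) := by
    rintro ⟨⟨b, x⟩, y⟩; simp
  have hsum : ∀ p, f p = (g p + g ((p.1.1, -p.1.2), p.2)) +
      (g ((p.1.1, p.1.2), -p.2) + g ((p.1.1, -p.1.2), -p.2)) := by
    rintro ⟨⟨b, x⟩, y⟩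
    simp only [g, h1, h2]
    by_cases h0 : f ((b, x), y) = 0
    · simp [h0]
    have four : ∀ c : ZMod 3, c = c + c + (c + c) := by decide
    rcases h3 b x y h0 with ⟨hb, hx, hy⟩ | ⟨hb, hx, hy⟩
    · rw [if_pos (by omega), if_pos (by omega), if_pos (by omega), if_pos (by omega)]
      exact four _
    · have hb : b % 3 = 0 ∨ b % 3 = 2 := by omega
      have hx : x % 3 = 1 ∨ x % 3 = 2 := by omega
      have hy : y % 3 = 1 ∨ y % 3 = 2 := by omega
      rcases hb with hb | hb <;> rcases hx with hx | hx <;> rcases hy with hy | hy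
      · rw [if_pos (by omega), if_neg (by omega), if_neg (by omega), if_neg (by omega)]; simp
      · rw [if_neg (by omega), if_neg (by omega), if_pos (by omega), if_neg (by omega)]; simp
      · rw [if_neg (by omega), if_pos (by omega), if_neg (by omega), if_neg (by omega)]; simp
      · rw [if_neg (by omega), if_neg (by omega), if_neg (by omega), if_pos (by omega)]; simp
      · rw [if_neg (by omega), if_neg (by omega), if_neg (by omega), if_pos (by omega)]; simp
      · rw [if_neg (by omega), if_pos (by omega), if_neg (by omega), if_neg (by omega)]; simp
      · rw [if_neg (by omega), if_neg (by omega), if_pos (by omega), if_neg (by omega)]; simp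
      · rw [if_pos (by omega), if_neg (by omega), if_neg (by omega), if_neg (by omega)]; simp
  have s1 : (Function.support fun p : (ℤ × ℤ) × ℤ => g ((p.1.1, -p.1.2), p.2)).Finite :=
    hg.preimage e1.injective.injOn
  have s2 : (Function.support fun p : (ℤ × ℤ) × ℤ => g ((p.1.1, p.1.2), -p.2)).Finite :=
    hg.preimage e2.injective.injOn
  have s3 : (Function.support fun p : (ℤ × ℤ) × ℤ => g ((p.1.1, -p.1.2), -p.2)).Finite :=
    hg.preimage e3.injective.injOn
  rw [finsum_congr hsum, finsum_add_distrib, finsum_add_distrib, finsum_add_distrib,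
    finsum_comp (g := g) _ e1.bijective, finsum_comp (g := g) _ e2.bijective,
    finsum_comp (g := g) _ e3.bijective, hT]
  · have four : ∀ c : ZMod 3, c + c + (c + c) = c := by decide
    exact four _
  · exact s2
  · exact s3
  · exact hg
  · exact s1
  · exact (hg.union s1).subset (Function.support_add _ _)
  · exact (s2.union s3).subset (Function.support_add _ _)

lemma sq_neg (x : ℤ) : sq (-x) = sq x := by simp [sq]

lemma L5 : U (psp 1 * phm 2 * phm 2) = 2 * (psp 1 * psp 2 * phm 3) := by
  unfold psp phm
  rw [PS_mul (FFt one_pos) (FFs two_pos), PS_mul ((FFt one_pos).prod (FFs two_pos)) (FFs two_pos),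
    PS_mul (FFt one_pos) (FFt two_pos),
    PS_mul ((FFt one_pos).prod (FFt two_pos)) (FFs three_pos)]
  ext m
  rw [coeff_two_mul]
  simp only [U, PS, coeff_mk]
  have hF : cf (fun p : (ℤ × ℤ) × ℤ => 1 * tri p.1.1 + 2 * tri p.1.2 + 3 * sq p.2)
      (fun p => 1 * 1 * sg p.2) m =
      2 * cf (fun p : ℤ × ℤ × ℤ => tri (p.2.1 + 2 * p.2.2 - 1 - p.1) + 2 * tri p.1 + 3 * sq p.2.1)
        (fun p => sg p.2.1) m := by
    rw [cf_decomp (((FFt one_pos).prod (FFt two_pos)).prod (FFs three_pos)) _ m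
      (fun p : ℤ × ℤ × ℤ => ((p.2.1 + 2 * p.2.2 - 1 - p.1, p.1), p.2.1))
      (fun p : ℤ × ℤ × ℤ => ((p.2.1 + 2 * p.2.2 - 1 - p.1, -1 - p.1), p.2.1)), two_mul]
    · congr 1
      · apply cf_congr
        · rintro ⟨r, t, w⟩
          simp
        · simp
      · apply cf_congr
        · rintro ⟨r, t, w⟩
          have h1 := tri_spec (-1 - r)
          have h2 := tri_spec r
          dsimp only
          zify
          linarith
        · simp
    · rintro ⟨a, b, c⟩ ⟨a', b', c'⟩ h
      simp only [Prod.mk.injEq] at h ⊢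
      omega
    · rintro ⟨a, b, c⟩ ⟨a', b', c'⟩ h
      simp only [Prod.mk.injEq] at h ⊢
      omega
    · rintro ⟨a, b, c⟩ ⟨a', b', c'⟩ h
      simp only [Prod.mk.injEq] at h
      omega
    · rintro ⟨⟨k, r⟩, t⟩
      simp only [Prod.mk.injEq, Prod.exists]
      rcases Int.emod_two_eq_zero_or_one (k + r + t) with h | h
      · right
        exact ⟨-1 - r, t, (k - r - t) / 2, by omega⟩
      · left
        exact ⟨r, t, (k + r + 1 - t) / 2, by omega⟩
  rw [hF, ← mul_assoc]
  have h4 : (2 * 2 : ZMod 3) = 1 := by decide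
  rw [h4, one_mul]
  unfold cf
  rw [L5core1]
  · refine finsum_congr ?_
    rintro ⟨r, t, w⟩
    dsimp only
    have hs : 1 * sg (w + 2 * t) * sg (w - t) = sg t := by
      rw [one_mul, sg_mul]
      apply sg_congr
      omega
    rw [hs]
    congr 1
    rw [eq_iff_iff]
    have h1 := tri_spec (t + 2 * w - 2 - 3 * r)
    have h2 := tri_spec (t + 2 * w - 1 - r)
    have h3 := tri_spec r
    have h4 := sq_spec (w + 2 * t)
    have h5 := sq_spec (w - t)
    have h6 := sq_spec t
    zify
    constructor <;> intro h <;> linarith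
  · exact (((FFt one_pos).prod (FFs two_pos)).prod (FFs two_pos)).supp _ _
  · intro b x y
    dsimp only
    simp only [sq_neg, sg_congr (show (-x) % 2 = x % 2 by omega)]
  · intro b x y
    dsimp only
    simp only [sq_neg, sg_congr (show (-y) % 2 = y % 2 by omega)]
  · intro b x y h
    have h : 1 * tri b + 2 * sq x + 2 * sq y = 3 * m + 1 := by
      by_contra hc
      exact h (if_neg hc)
    refine tri_zmod b x y m (tri b) (tri_spec b) ?_
    rw [← sq_spec, ← sq_spec]
    omega

end B4

namespace B4

open PowerSeries

lemma expand_PS {ι : Type} (e : ι → ℕ) (s : ι → ZMod 3) (k : ℕ) (hk : k ≠ 0) :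
    expand k hk (PS e s) = PS (fun i => k * e i) s := by
  ext n
  rw [coeff_expand]
  simp only [PS, coeff_mk, cf]
  split_ifs with h
  · obtain ⟨m, rfl⟩ := h
    rw [Nat.mul_div_cancel_left _ (Nat.pos_of_ne_zero hk)]
    refine finsum_congr fun i => ?_
    simp [hk]
  · symm
    exact finsum_eq_zero_of_forall_eq_zero fun i =>
      if_neg fun hc : k * e i = n => h ⟨_, hc.symm⟩

lemma cube (f : PowerSeries (ZMod 3)) : f ^ 3 = expand 3 (by norm_num) f := by
  have h := MvPowerSeries.map_frobenius_expand (σ := Unit) (R := ZMod 3) (p := 3)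
    (hp := by norm_num) (f := f)
  have h2 : frobenius (ZMod 3) 3 = RingHom.id _ := ZMod.frobenius_zmod 3
  rw [h2, MvPowerSeries.map_id] at h
  exact h.symm

lemma U_mul (f g : PowerSeries (ZMod 3)) : U (f * expand 3 (by norm_num) g) = U f * g := by
  ext m
  rw [coeff_mul]
  simp only [U, coeff_mk]
  rw [coeff_mul]
  symm
  refine Finset.sum_of_injOn (fun p : ℕ × ℕ => (3 * p.1 + 1, 3 * p.2)) ?_ ?_ ?_ ?_
  · rintro ⟨a, b⟩ _ ⟨c, d⟩ _ h
    simp only [Prod.mk.injEq] at h ⊢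
    omega
  · rintro ⟨a, b⟩ h
    have := Finset.HasAntidiagonal.mem_antidiagonal.1 h
    refine Finset.HasAntidiagonal.mem_antidiagonal.2 ?_
    dsimp only at this ⊢
    omega
  · rintro ⟨a, b⟩ h hn
    have h := Finset.HasAntidiagonal.mem_antidiagonal.1 h
    dsimp only at h ⊢
    rw [coeff_expand_of_not_dvd, mul_zero]
    rintro ⟨c, rfl⟩
    refine hn ⟨(m - c, c), ?_, ?_⟩
    · refine Finset.HasAntidiagonal.mem_antidiagonal.2 ?_
      dsimp only
      omega
    · have h' : 3 * (m - c) + 1 = a := by omega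
      exact Prod.ext h' rfl
  · rintro ⟨a, b⟩ _
    simp

lemma pen_one : pen 1 = pentagonalSeries (ZMod 3) := by
  ext n
  simp only [pen, PS, coeff_mk, cf, one_mul]
  by_cases h : n ∈ Set.range pentagonal
  · obtain ⟨k, rfl⟩ := h
    rw [coeff_pentagonalSeries_pentagonal, finsum_eq_single _ k]
    · rw [if_pos rfl]
      unfold sg
      split_ifs with h
      · rw [Int.negOnePow_even _ (Int.even_iff.2 h)]; simp
      · rw [Int.negOnePow_odd _ (Int.odd_iff.2 (by omega))]; simp
    · intro x hx
      exact if_neg fun hc => hx (pentagonal_injective hc)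
  · rw [coeff_pentagonalSeries_eq_zero _ h]
    exact finsum_eq_zero_of_forall_eq_zero fun i => if_neg fun hc => h ⟨_, hc⟩

section
open PowerSeries.WithPiTopology

lemma genfun_aux (R : Type) [TopologicalSpace R] [T2Space R] [CommRing R] [IsDomain R]
    [IsTopologicalRing R] {m : ℕ} (hm : 0 < m) :
    (∏' i, if ¬m ∣ i + 1 then ∑' j, (X : PowerSeries R) ^ ((i + 1) * j) else 1) *
      ∏' i, (1 - X ^ (i + 1)) = ∏' i, (1 - X ^ ((i + 1) * m)) := by
  rw [← (Nat.Partition.multipliable_powerSeriesMk_card_restricted R (¬ m ∣ ·)).tprod_mul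
    (multipliable_one_sub_X_pow _)]
  simp_rw [ite_not, ite_mul, pow_mul]
  conv in fun b ↦ _ =>
    ext b
    rw [tsum_pow_mul_one_sub_of_constantCoeff_eq_zero (by simp)]
  refine tprod_eq_tprod_of_ne_one_bij (fun i ↦ (i.val + 1) * m - 1) ?_ ?_ ?_
  · intro a b h
    rw [tsub_left_inj (by nlinarith) (by nlinarith), mul_left_inj' (hm.ne.symm), add_left_inj] at h
    exact SetCoe.ext h
  · suffices ∀ (i : ℕ), m ∣ i + 1 → ∃ j ≠ 0, j * m - 1 = i by simpa
    intro i hi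
    obtain ⟨j, hj⟩ := dvd_def.mp hi
    refine ⟨j, by grind, Nat.sub_eq_of_eq_add ?_⟩
    rw [hj, mul_comm m j]
  · intro i
    have : (i + 1) * m - 1 + 1 = (i + 1) * m := by grind
    simp [this, pow_mul]

lemma genfun (R : Type) [CommRing R] [IsDomain R] :
    PowerSeries.mk (fun n => (bReg 4 n : R)) * pentagonalSeries R =
      expand 4 (by norm_num) (pentagonalSeries R) := by
  let _ : TopologicalSpace R := ⊥
  have _ : DiscreteTopology R := ⟨rfl⟩
  have h1 := genfun_aux R (m := 4) (by norm_num)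
  rw [← Nat.Partition.powerSeriesMk_card_restricted_eq_tprod R (¬ 4 ∣ ·),
    tprod_one_sub_X_pow] at h1
  have h2 : HasProd (fun i => (1 - X ^ ((i + 1) * 4) : PowerSeries R))
      (expand 4 (by norm_num) (pentagonalSeries R)) := by
    have h := hasProd_one_sub_X_pow R
    rw [HasProd, tendsto_iff_coeff_tendsto] at h ⊢
    intro n
    have h3 : ∀ s : Finset ℕ, ∏ i ∈ s, (1 - X ^ ((i + 1) * 4) : PowerSeries R) =
        expand 4 (by norm_num) (∏ i ∈ s, (1 - X ^ (i + 1) : PowerSeries R)) := by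
      intro s
      rw [map_prod]
      refine Finset.prod_congr rfl fun i _ => ?_
      rw [map_sub, map_one, map_pow, expand_X, ← pow_mul, mul_comm]
    simp only [h3, coeff_expand]
    split_ifs
    · exact h _
    · exact tendsto_const_nhds
  rw [h2.tprod_eq] at h1
  rw [← h1]
  rfl

end

lemma H0 : PowerSeries.mk (fun n => (bReg 4 n : ZMod 3)) * pen 1 = pen 4 := by
  have h : pen 4 = expand 4 (by norm_num) (pen 1) := by
    unfold pen
    rw [expand_PS]
    simp
  rw [h, pen_one, genfun]

lemma coeff_zero_sq {k : ℕ} (hk : 0 < k) (s : ℤ → ZMod 3) : 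
    constantCoeff (PS (fun x : ℤ => k * sq x) s) = s 0 := by
  rw [← coeff_zero_eq_constantCoeff_apply]
  simp only [PS, coeff_mk, cf]
  rw [finsum_eq_single _ 0]
  · simp [sq]
  · intro x hx
    apply if_neg
    simp [sq, hx]
    omega

lemma coeff_zero_tri {k : ℕ} (hk : 0 < k) (s : ℤ → ZMod 3) :
    constantCoeff (PS (fun x : ℤ => k * tri x) s) = s 0 + s (-1) := by
  rw [← coeff_zero_eq_constantCoeff_apply]
  simp only [PS, coeff_mk, cf]
  rw [finsum_eq_sum_of_support_subset (s := {0, -1})]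
  · rw [Finset.sum_pair (by norm_num)]
    simp [tri]
  · intro x hx
    have h0 : k * tri x = 0 := by
      by_contra hc
      exact hx (if_neg hc)
    have h1 : tri x = 0 := by
      rcases Nat.mul_eq_zero.1 h0 with h | h
      · omega
      · exact h
    have h2 := tri_spec x
    rw [h1] at h2
    have h3 : x * (x + 1) = 0 := by rw [← h2]; simp
    rcases mul_eq_zero.1 h3 with h | h
    · simp [h]
    · have : x = -1 := by omega
      simp [this]

lemma pen_ne : pen 1 ≠ 0 := by
  intro h
  have h1 := congrArg (coeff (pentagonal 0)) h
  rw [pen_one, coeff_pentagonalSeries_pentagonal] at h1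
  simp at h1

lemma cc_phm {k : ℕ} (hk : 0 < k) : constantCoeff (phm k) = 1 := by
  unfold phm
  rw [coeff_zero_sq hk]
  decide

lemma phm_ne : phm 2 ≠ 0 := by
  intro h
  have h1 := cc_phm (k := 2) (by norm_num)
  rw [h] at h1
  simp at h1

lemma H4 : phm 1 * psp 1 = psm 1 * phm 2 := by
  have h : (phm 1 * psp 1) ^ 2 = (psm 1 * phm 2) ^ 2 := by
    linear_combination (-phm 1 ^ 2) * L3 + phm 1 * php * L2 + psm 1 ^ 2 * L1
  rcases sq_eq_sq_iff_eq_or_eq_neg.1 h with h | h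
  · exact h
  · exfalso
    have h1 := congrArg constantCoeff h
    rw [map_neg, map_mul, map_mul, cc_phm one_pos, cc_phm two_pos] at h1
    unfold psp psm at h1
    rw [coeff_zero_tri one_pos, coeff_zero_tri one_pos] at h1
    revert h1
    decide

lemma H6 : 2 * U (PowerSeries.mk (fun n => (bReg 4 n : ZMod 3))) = psm 3 * phm 1 := by
  set B : PowerSeries (ZMod 3) := PowerSeries.mk (fun n => (bReg 4 n : ZMod 3)) with hB
  have h0 : B * pen 1 = pen 4 := H0
  have h1 : 2 * B * phm 2 = psp 1 := by
    apply mul_left_cancel₀ pen_ne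
    linear_combination 2 * phm 2 * h0 - L4
  have h3 : phm 3 = phm 1 ^ 3 := by
    rw [cube]; unfold phm; rw [expand_PS]; simp
  have h3' : psm 3 = psm 1 ^ 3 := by
    rw [cube]; unfold psm; rw [expand_PS]; simp
  have h2 : psp 1 * phm 2 * phm 2 = (B + B) * expand 3 (by norm_num) (phm 2) := by
    rw [← cube, ← h1]; ring
  have hU : U (B + B) = 2 * U B := by
    ext n
    rw [coeff_two_mul]
    simp only [U, coeff_mk, map_add]
    ring
  have h5 := L5
  rw [h2, U_mul, hU, h3] at h5
  apply mul_left_cancel₀ phm_ne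
  rw [h3']
  linear_combination h5 + psp 1 * phm 1 ^ 2 * L2 + psm 1 ^ 2 * phm 1 * H4

lemma nonsq (l : ℕ) (hmod : l % 24 = 13 ∨ l % 24 = 17 ∨ l % 24 = 19 ∨ l % 24 = 23) :
    ¬ IsSquare ((-6 : ℤ) : ZMod l) := by
  apply ZMod.nonsquare_of_jacobiSym_eq_neg_one
  rw [jacobiSym.mod_right _ (Nat.odd_iff.2 (by omega))]
  have : 4 * (-6 : ℤ).natAbs = 24 := rfl
  rw [this]
  rcases hmod with h | h | h | h <;> rw [h] <;> norm_num

lemma no_rep (l : ℕ) (hl : l.Prime)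
    (hmod : l % 24 = 13 ∨ l % 24 = 17 ∨ l % 24 = 19 ∨ l % 24 = 23) (k : ℕ) (hk : ¬ l ∣ k)
    (z x : ℤ) (h : 3 * z ^ 2 + 8 * x ^ 2 = 8 * l * k + 3 * l ^ 2) : False := by
  haveI := Fact.mk hl
  have hns := nonsq l hmod
  have hge : 13 ≤ l := by omega
  have e : (3 * (z : ZMod l) ^ 2 + 8 * (x : ZMod l) ^ 2) = 0 := by
    have := congrArg (Int.cast : ℤ → ZMod l) h
    push_cast at this
    simpa using this
  have hnd : ∀ c : ℕ, 0 < c → c < 13 → ((c : ℕ) : ZMod l) ≠ 0 := by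
    intro c hc hc' h0
    rw [ZMod.natCast_eq_zero_iff] at h0
    have := Nat.le_of_dvd hc h0
    omega
  have n2 : (2 : ZMod l) ≠ 0 := by exact_mod_cast hnd 2 (by norm_num) (by norm_num)
  have n3 : (3 : ZMod l) ≠ 0 := by exact_mod_cast hnd 3 (by norm_num) (by norm_num)
  have hx : (x : ZMod l) = 0 := by
    by_contra hx
    apply hns
    refine ⟨3 * z / (2 * x), ?_⟩
    push_cast
    field_simp
    linear_combination (-3) * e
  have hz : (z : ZMod l) = 0 := by
    rw [hx] at e
    have : (z : ZMod l) ^ 2 = 0 := by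
      apply mul_left_cancel₀ n3
      linear_combination e
    exact pow_eq_zero_iff (two_ne_zero) |>.1 this
  rw [ZMod.intCast_zmod_eq_zero_iff_dvd] at hx hz
  obtain ⟨x', rfl⟩ := hx
  obtain ⟨z', rfl⟩ := hz
  have hl0 : (l : ℤ) ≠ 0 := by exact_mod_cast hl.ne_zero
  have h8 : (8 * k : ℤ) = l * (3 * z' ^ 2 + 8 * x' ^ 2 - 3) := by
    apply mul_left_cancel₀ hl0
    linear_combination -h
  have h9 : l ∣ 8 * k := by
    have : (l : ℤ) ∣ ((8 * k : ℕ) : ℤ) := ⟨_, by push_cast; exact h8⟩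
    exact_mod_cast this
  rcases (Nat.Prime.dvd_mul hl).1 h9 with h | h
  · have := Nat.le_of_dvd (by norm_num) h
    omega
  · exact hk h

end B4

/-- If `l ≡ 13,17,19,23 (mod 24)` is prime, then
`b_4(3l(ln+j) + (9l²-1)/8) ≡ 0 (mod 3)` for all `n` and `1 ≤ j ≤ l-1`. -/
theorem b4_mod_three_family_two (l : ℕ) (hl : l.Prime)
    (hmod : l % 24 = 13 ∨ l % 24 = 17 ∨ l % 24 = 19 ∨ l % 24 = 23)
    (n j : ℕ) (hj1 : 1 ≤ j) (hj2 : j ≤ l - 1) :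
    bReg 4 (3 * l * (l * n + j) + (9 * l ^ 2 - 1) / 8) % 3 = 0 := by
  obtain ⟨q, hq⟩ : ∃ q, l ^ 2 = 8 * q + 1 := by
    have : l % 2 = 1 := by omega
    obtain ⟨a, rfl⟩ : ∃ a, l = 2 * a + 1 := ⟨l / 2, by omega⟩
    obtain ⟨c, hc⟩ := Nat.even_mul_succ_self a
    have : a * (a + 1) = c + c := hc
    exact ⟨c, by nlinarith⟩
  set k := l * n + j with hk
  have hkd : ¬ l ∣ k := by
    rw [hk]
    intro hd
    have h1 : l ∣ j := (Nat.dvd_add_right (Dvd.intro _ rfl)).1 hd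
    have := Nat.le_of_dvd (by omega) h1
    omega
  have hN : 3 * l * k + (9 * l ^ 2 - 1) / 8 = 3 * (l * k + 3 * q) + 1 := by
    have : (9 * l ^ 2 - 1) / 8 = 9 * q + 1 := by omega
    rw [this]; ring
  rw [hN]
  have h6 := congrArg (PowerSeries.coeff (l * k + 3 * q)) B4.H6
  rw [B4.coeff_two_mul] at h6
  unfold B4.psm B4.phm at h6
  rw [B4.PS_mul (B4.FFt three_pos) (B4.FFs one_pos)] at h6
  simp only [B4.U, B4.PS, PowerSeries.coeff_mk] at h6
  have hz : B4.cf (fun p : ℤ × ℤ => 3 * B4.tri p.1 + 1 * B4.sq p.2)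
      (fun p => B4.sg (B4.tri p.1) * B4.sg p.2) (l * k + 3 * q) = 0 := by
    unfold B4.cf
    refine finsum_eq_zero_of_forall_eq_zero ?_
    rintro ⟨b, x⟩
    refine if_neg fun hc => ?_
    dsimp only at hc
    refine B4.no_rep l hl hmod k hkd (2 * b + 1) x ?_
    have h1 := B4.tri_spec b
    have h2 := B4.sq_spec x
    zify at hc hq
    linear_combination (-12) * h1 - 8 * h2 + 8 * hc - 3 * hq
  rw [hz] at h6
  have h7 : ∀ c : ZMod 3, 2 * c = 0 → c = 0 := by decide
  have h8 := h7 _ h6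
  rw [ZMod.natCast_eq_zero_iff] at h8
  exact Nat.mod_eq_zero_of_dvd h8
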